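/- There exists a set S of elements of F_q, each of which generates the cyclic group (F_q^∞, ψ) of order q + 1, such that |S| ≥ ⌊φ(q+1)/(2l)⌋ (where φ is Euler's totient function and q = p^l for the prime p), and for any two distinct i, j ∈ S the Cayley digraphs Cay(G, X_i) and Cay(G, X_j) are nonisomorphic; that is, there is no bijection f: G → G such that for all g, h ∈ G, hg⁻¹ ∈ X_i if and only if f(h)f(g)⁻¹ ∈ X_j. -/

import Mathlib

/-- The Heisenberg group `H₃(F)` of upper unitriangular 3×3 matrices over `F`,
recorded by the three free entries: `x` in position (1,2), `y` in position (2,3),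
`z` in position (1,3). -/
@[ext]
structure Heis (F : Type*) where
  x : F
  y : F
  z : F
deriving DecidableEq

namespace Heis

variable {F : Type*} [Field F]

/-- Multiplication corresponding to the matrix product. -/
instance : Group (Heis F) where
  mul a b := ⟨a.x + b.x, a.y + b.y, a.z + b.z + a.x * b.y⟩
  one := ⟨0, 0, 0⟩
  inv a := ⟨-a.x, -a.y, -a.z + a.x * a.y⟩
  mul_assoc a b c := Heis.ext
    (show a.x + b.x + c.x = a.x + (b.x + c.x) by ring)
    (show a.y + b.y + c.y = a.y + (b.y + c.y) by ring)
    (show a.z + b.z + a.x * b.y + c.z + (a.x + b.x) * c.y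
        = a.z + (b.z + c.z + b.x * c.y) + a.x * (b.y + c.y) by ring)
  one_mul a := Heis.ext
    (show (0 : F) + a.x = a.x by ring)
    (show (0 : F) + a.y = a.y by ring)
    (show (0 : F) + a.z + 0 * a.y = a.z by ring)
  mul_one a := Heis.ext
    (show a.x + 0 = a.x by ring)
    (show a.y + 0 = a.y by ring)
    (show a.z + 0 + a.x * 0 = a.z by ring)
  inv_mul_cancel a := Heis.ext
    (show -a.x + a.x = 0 by ring)
    (show -a.y + a.y = 0 by ring)
    (show -a.z + a.x * a.y + a.z + -a.x * a.y = 0 by ring)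

instance [Fintype F] : Fintype (Heis F) :=
  Fintype.ofEquiv (F × F × F)
    ⟨fun p => ⟨p.1, p.2.1, p.2.2⟩, fun a => (a.x, a.y, a.z), fun _ => rfl, fun _ => rfl⟩

end Heis

/-- The element `g(x,y,z)` of the Heisenberg group. -/
def gElt {F : Type*} (x y z : F) : Heis F := ⟨x, y, z⟩

/-- The center `Z = {g(0,0,z) : z ∈ F}` of the Heisenberg group, as a set. -/
def Zset (F : Type*) [Field F] : Set (Heis F) := {g : Heis F | g.x = 0 ∧ g.y = 0}

/-- The center `Z` as a subgroup of the Heisenberg group. -/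
def Zsub (F : Type*) [Field F] : Subgroup (Heis F) where
  carrier := Zset F
  mul_mem' := fun {a b} ha hb =>
    ⟨show a.x + b.x = 0 by rw [ha.1, hb.1, add_zero],
     show a.y + b.y = 0 by rw [ha.2, hb.2, add_zero]⟩
  one_mem' := ⟨rfl, rfl⟩
  inv_mem' := fun {a} ha =>
    ⟨show -a.x = 0 by rw [ha.1, neg_zero],
     show -a.y = 0 by rw [ha.2, neg_zero]⟩

/-- `γ_i(α,β) = αβ/2 + (α² − εβ²)i`. -/
def gam {F : Type*} [Field F] (ε i α β : F) : F := α * β / 2 + (α ^ 2 - ε * β ^ 2) * i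

/-- `Y_i = {g(α, β, γ_i(α,β)) : (α,β) ≠ (0,0)}`. -/
def Yset {F : Type*} [Field F] (ε i : F) : Set (Heis F) :=
  {g : Heis F | ∃ α β : F, (α, β) ≠ (0, 0) ∧ g = gElt α β (gam ε i α β)}

/-- `X_i = Y_i ∪ {e}`. -/
def Xset {F : Type*} [Field F] (ε i : F) : Set (Heis F) := Yset ε i ∪ {1}

/-- The map `ρ(M) : G → G` attached to the matrix `M = [[α,β],[εβ,α]]`. -/
def rho {F : Type*} [Field F] (ε α β : F) : Heis F → Heis F := fun g =>
  gElt (α * g.x + ε * β * g.y) (β * g.x + α * g.y)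
    (α * β * (g.x ^ 2 / 2 + ε * g.y ^ 2 / 2) + ε * β ^ 2 * g.x * g.y
      + (α ^ 2 - ε * β ^ 2) * g.z)

/-- `K = {ρ(M) : M = [[α,β],[εβ,α]], (α,β) ≠ (0,0)}`, as a set of maps `G → G`. -/
def Kset {F : Type*} [Field F] (ε : F) : Set (Heis F → Heis F) :=
  {f | ∃ α β : F, (α, β) ≠ (0, 0) ∧ f = rho ε α β}

/-- The family of sets `{e}`, `Z \ {e}`, `Y_i` for `i ∈ F`. -/
def SFam {F : Type*} [Field F] (ε : F) : Set (Set (Heis F)) :=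
  insert {1} (insert (Zset F \ {1}) {S | ∃ i : F, S = Yset ε i})

/-- `f` preserves each of the basic sets `{e}`, `Z \ {e}`, `Y_i`:
`hg⁻¹ ∈ S ↔ f(h)f(g)⁻¹ ∈ S`. -/
def Preserves {F : Type*} [Field F] (ε : F) (f : Heis F → Heis F) : Prop :=
  ∀ S ∈ SFam ε, ∀ g h : Heis F, h * g⁻¹ ∈ S ↔ f h * (f g)⁻¹ ∈ S

/-- The set of permutations of `G` of the form `x ↦ σ(x)·c` with `σ ∈ K`, `c ∈ G`. -/
def Aset {F : Type*} [Field F] (ε : F) : Set (Equiv.Perm (Heis F)) :=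
  {f | ∃ σ ∈ Kset ε, ∃ c : Heis F, ∀ x : Heis F, f x = σ x * c}

/-- The operation `ψ` on `F ∪ {∞}`, with `∞` encoded as `none`. -/
def psi {F : Type*} [Field F] [DecidableEq F] (ε : F) : Option F → Option F → Option F
  | none, j => j
  | some i, none => some i
  | some i, some j => if i + j = 0 then none else some ((i * j + ε / 16) / (i + j))

/-- `Y_k` for `k ∈ F ∪ {∞}`, where `Y_∞ = Z \ {e}`. -/
def YInf {F : Type*} [Field F] (ε : F) : Option F → Set (Heis F)
  | some i => Yset ε i
  | none => Zset F \ {1}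

section Geometry

variable {F : Type*} [Field F]

/-- The coordinate `z - xy/2` of a Heisenberg element, in which multiplication is twisted by
half of the determinant form. -/
def symCoord (g : Heis F) : F := g.z - g.x * g.y / 2

/-- The element with first two entries `v` and symmetric coordinate `t`. -/
def ofSymCoord (v : F × F) (t : F) : Heis F := ⟨v.1, v.2, t + v.1 * v.2 / 2⟩

/-- The anisotropic form `v₁² - εv₂²`. -/
def normForm (ε : F) (v : F × F) : F := v.1 ^ 2 - ε * v.2 ^ 2

/-- The determinant form on `F × F`. -/
def detForm (v w : F × F) : F := v.1 * w.2 - v.2 * w.1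

/-- Adjacency in `Cay(G, X_i)` from a point above `v` with symmetric coordinate `t` leads to the
point above `w` with this symmetric coordinate. -/
def nextCoord (ε i : F) (v w : F × F) (t : F) : F :=
  t + i * normForm ε (w - v) - detForm v w / 2

lemma eq_ofSymCoord (g : Heis F) : g = ofSymCoord (g.x, g.y) (symCoord g) := by
  ext <;> simp [ofSymCoord, symCoord]

lemma symCoord_ofSymCoord (v : F × F) (t : F) : symCoord (ofSymCoord v t) = t := by
  simp [ofSymCoord, symCoord]

lemma mem_Xset_iff (ε i : F) (g : Heis F) :
    g ∈ Xset ε i ↔ symCoord g = i * normForm ε (g.x, g.y) := by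
  constructor
  · rintro (⟨α, β, -, rfl⟩ | rfl)
    · simp only [symCoord, normForm, gElt, gam]; ring
    · have h : (1 : Heis F) = ⟨0, 0, 0⟩ := rfl
      simp [h, symCoord, normForm]
  · intro h
    by_cases hv : (g.x, g.y) = (0, 0)
    · right
      obtain ⟨hx, hy⟩ := Prod.mk.inj hv
      simp only [symCoord, normForm, hx, hy] at h
      exact Heis.ext hx hy (show g.z = 0 by linear_combination h)
    · left
      refine ⟨g.x, g.y, hv, Heis.ext rfl rfl ?_⟩
      simp only [symCoord, normForm] at h
      simp only [gElt, gam]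
      linear_combination h

lemma mul_inv_mem_Xset_iff [NeZero (2 : F)] (ε i : F) (g h : Heis F) :
    h * g⁻¹ ∈ Xset ε i ↔
      symCoord h = nextCoord ε i (g.x, g.y) (h.x, h.y) (symCoord g) := by
  have h2 : (2 : F) ≠ 0 := NeZero.ne 2
  have e : h * g⁻¹ = ⟨h.x + -g.x, h.y + -g.y, h.z + (-g.z + g.x * g.y) + h.x * -g.y⟩ := rfl
  rw [mem_Xset_iff, e]
  simp only [symCoord, nextCoord, normForm, detForm, Prod.fst_sub, Prod.snd_sub]
  field_simp
  constructor <;> intro H <;> linear_combination H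

/-- Points over distinct `v, w` have a common out-neighbour. -/
lemma exists_common_nextCoord [NeZero (2 : F)] {ε : F} (hε : ¬IsSquare ε) (i : F) {v w : F × F}
    (hvw : v ≠ w) (t u : F) : ∃ a, nextCoord ε i v a t = nextCoord ε i w a u := by
  have h2 : (2 : F) ≠ 0 := NeZero.ne 2
  obtain ⟨v₁, v₂⟩ := v
  obtain ⟨w₁, w₂⟩ := w
  set A := -2 * i * (v₁ - w₁) + (v₂ - w₂) / 2 with hA
  set B := 2 * i * ε * (v₂ - w₂) - (v₁ - w₁) / 2 with hB
  set k := u - t + i * (normForm ε (w₁, w₂) - normForm ε (v₁, v₂)) with hk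
  have key : ∀ a₁ a₂, A * a₁ + B * a₂ = k →
      nextCoord ε i (v₁, v₂) (a₁, a₂) t = nextCoord ε i (w₁, w₂) (a₁, a₂) u := by
    intro a₁ a₂ h
    simp only [nextCoord, normForm, detForm, Prod.mk_sub_mk, hA, hB, hk] at h ⊢
    field_simp at h ⊢
    linear_combination h
  by_cases hA0 : A = 0
  · by_cases hB0 : B = 0
    · exfalso
      have e1 : v₂ - w₂ = 4 * i * (v₁ - w₁) := by
        rw [hA] at hA0; field_simp at hA0; linear_combination hA0
      have e2 : (v₁ - w₁) * (1 - ε * (4 * i) ^ 2) = 0 := by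
        rw [hB] at hB0; field_simp at hB0
        linear_combination (-1 : F) * hB0 + 4 * i * ε * e1
      rcases mul_eq_zero.1 e2 with e | e
      · refine hvw (Prod.ext (sub_eq_zero.1 e) (sub_eq_zero.1 ?_))
        rw [e1, e, mul_zero]
      · have hi : 4 * i ≠ 0 := by
          intro h0
          rw [h0] at e
          simp at e
        refine hε ⟨(4 * i)⁻¹, ?_⟩
        rw [← mul_inv]
        exact eq_inv_of_mul_eq_one_left (by linear_combination -e)
    · exact ⟨(0, k / B), key _ _ (by field_simp; simp)⟩
  · exact ⟨(k / A, 0), key _ _ (by field_simp; simp)⟩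

/-- A map over the plane intertwining the two adjacency laws forces its parameters to agree up to
a field endomorphism and a sign. -/
lemma exists_ringHom_of_intertwines [NeZero (2 : F)] {ε i j : F}
    {f : F × F → F × F} {T : F × F → F → F} (hf : f 0 = 0) (hT : T 0 0 = 0) (hT1 : T 0 1 ≠ 0)
    (H : ∀ v w t, T w (nextCoord ε i v w t) = nextCoord ε j (f v) (f w) (T v t)) :
    ∃ τ : F →+* F, τ (i ^ 2 * ε) = j ^ 2 * ε := by
  have h2 : (2 : F) ≠ 0 := NeZero.ne 2
  have h0 : ∀ w s, T w s = T 0 (s - i * normForm ε w) + j * normForm ε (f w) := by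
    intro w s
    have := H 0 w (s - i * normForm ε w)
    simpa [nextCoord, detForm, hf] using this
  have h1 : ∀ t v w,
      T 0 (t + (i * (normForm ε (w - v) - normForm ε w + normForm ε v) - detForm v w / 2)) =
      T 0 t + (j * (normForm ε (f w - f v) - normForm ε (f w) + normForm ε (f v))
        - detForm (f v) (f w) / 2) := by
    intro t v w
    have := H v w (t + i * normForm ε v)
    rw [h0 w, h0 v] at this
    simp only [nextCoord] at this
    rw [add_sub_cancel_right] at this
    rw [← sub_eq_zero] at this ⊢
    rw [← this]
    ring_nf
  have hadd : ∀ t b, T 0 (t + b) = T 0 t + T 0 b := by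
    intro t b
    have e := fun t => h1 t (1, 0) (1, -2 * b)
    have eb : i * (normForm ε (((1, -2 * b) : F × F) - (1, 0)) - normForm ε (1, -2 * b)
        + normForm ε (1, 0)) - detForm ((1, 0) : F × F) (1, -2 * b) / 2 = b := by
      simp only [normForm, detForm, Prod.mk_sub_mk]; field_simp; ring
    rw [eb] at e
    have e' := e 0
    rw [zero_add, hT, zero_add] at e'
    rw [e, e']
  let S : F →+ F := ⟨⟨T 0, hT⟩, hadd⟩
  have hS1 : S 1 ≠ 0 := hT1
  have hdouble : ∀ x y, S (2 * x) = 2 * y → S x = y := by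
    intro x y h
    rw [two_mul, map_add, ← two_mul] at h
    exact mul_left_cancel₀ h2 h
  have hform : ∀ v w,
      S (i * (normForm ε (w - v) - normForm ε w + normForm ε v) - detForm v w / 2) =
      j * (normForm ε (f w - f v) - normForm ε (f w) + normForm ε (f v))
        - detForm (f v) (f w) / 2 := by
    intro v w
    have e := h1 0 v w
    rw [zero_add, hT, zero_add] at e
    exact e
  let P : F × F → F × F → F := fun v w => v.1 * w.1 - ε * (v.2 * w.2)
  have hnorm : ∀ v, S (i * normForm ε v) = j * normForm ε (f v) := by
    intro v
    apply hdouble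
    have := hform v 0
    rw [hf] at this
    convert this using 2 <;> simp [normForm, detForm] <;> ring
  have hb : ∀ v w, S (2 * (i * P v w) + detForm v w / 2) =
      2 * (j * P (f v) (f w)) + detForm (f v) (f w) / 2 := by
    intro v w
    have e1 : 2 * (i * P v w) + detForm v w / 2 = i * normForm ε v + i * normForm ε v -
        (i * (normForm ε (w - v) - normForm ε w + normForm ε v) - detForm v w / 2) := by
      simp only [normForm, P, Prod.fst_sub, Prod.snd_sub]; ring
    rw [e1, map_sub, map_add, hnorm, hform]
    simp only [normForm, P, Prod.fst_sub, Prod.snd_sub]; ring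
  have hP : ∀ v w, S (i * P v w) = j * P (f v) (f w) := by
    intro v w
    apply hdouble
    apply hdouble
    have e1 : 2 * (2 * (i * P v w)) = (2 * (i * P v w) + detForm v w / 2) +
        (2 * (i * P w v) + detForm w v / 2) := by
      simp only [P, detForm]; ring
    rw [e1, map_add, hb, hb]
    simp only [P, detForm]; ring
  have hD : ∀ v w, S (detForm v w) = detForm (f v) (f w) := by
    intro v w
    have e1 : detForm v w = (2 * (i * P v w) + detForm v w / 2) -
        (2 * (i * P w v) + detForm w v / 2) := by
      simp only [P, detForm]; field_simp; ring
    rw [e1, map_sub, hb, hb]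
    simp only [P, detForm]; field_simp; ring
  obtain ⟨⟨a, c⟩, he₁⟩ : ∃ p, f (1, 0) = p := ⟨_, rfl⟩
  obtain ⟨⟨b, d⟩, he₂⟩ : ∃ p, f (0, 1) = p := ⟨_, rfl⟩
  have hdet : S 1 = a * d - c * b := by
    have := hD (1, 0) (0, 1)
    simpa [detForm, he₁, he₂] using this
  have hy : ∀ v : F × F, S v.2 = a * (f v).2 - c * (f v).1 := by
    intro v
    have := hD (1, 0) v
    simpa [detForm, he₁] using this
  have hx : ∀ v : F × F, S v.1 = (f v).1 * d - (f v).2 * b := by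
    intro v
    have := hD v (0, 1)
    simpa [detForm, he₂] using this
  have hmul : ∀ x y, S 1 * S (x * y) = S x * S y := by
    intro x y
    have e := hD (x, 0) (0, y)
    have e1 := hx (x, 0)
    have e2 := hy (x, 0)
    have e3 := hx (0, y)
    have e4 := hy (0, y)
    simp only [detForm, mul_zero, sub_zero, map_zero] at e e1 e2 e3 e4
    rw [e, e1, e4, hdet]
    linear_combination ((f (0, y)).1 * d - (f (0, y)).2 * b) * e2
  let τ : F →+* F :=
    { toFun := fun x => S x / S 1
      map_one' := div_self hS1
      map_mul' := fun x y => by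
        field_simp
        linear_combination hmul x y
      map_zero' := by simp
      map_add' := fun x y => by rw [map_add, add_div] }
  have hτ : ∀ x, S x = S 1 * τ x := fun x => (mul_div_cancel₀ (S x) hS1).symm
  refine ⟨τ, ?_⟩
  have n1 := hP (1, 0) (1, 0)
  have n2 := hP (0, 1) (0, 1)
  have n3 := hP (1, 0) (0, 1)
  simp only [P, he₁, he₂, mul_zero, mul_one, sub_zero, map_zero, zero_sub, mul_neg,
    map_neg] at n1 n2 n3
  rw [hτ] at n1 n2
  rw [map_mul] at n2
  rw [map_mul, map_pow]
  have hS2 : S 1 ^ 2 ≠ 0 := pow_ne_zero 2 hS1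
  apply mul_left_cancel₀ hS2
  rw [hdet] at n1 n2 ⊢
  linear_combination ((a * d - c * b) * (τ i * τ ε)) * n1
    - j * (a * a - ε * (c * c)) * n2 + j * (a * b - ε * (c * d)) * n3


/-- Isomorphism of the Cayley digraphs `Cay(G, X_i)` and `Cay(G, X_j)`. -/
def CayleyIso (ε i j : F) : Prop :=
  ∃ f : Heis F → Heis F, Function.Bijective f ∧
    ∀ g h : Heis F, h * g⁻¹ ∈ Xset ε i ↔ f h * (f g)⁻¹ ∈ Xset ε j

lemma cayleyIso_equivalence (ε : F) : Equivalence (CayleyIso ε) where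
  refl _ := ⟨id, Function.bijective_id, fun _ _ => Iff.rfl⟩
  symm := by
    rintro i j ⟨f, hf, H⟩
    refine ⟨(Equiv.ofBijective f hf).symm, Equiv.bijective _, fun g h => ?_⟩
    rw [H]
    simp only [Equiv.ofBijective_apply_symm_apply]
  trans := by
    rintro i j k ⟨f, hf, H⟩ ⟨f', hf', H'⟩
    exact ⟨f' ∘ f, hf'.comp hf, fun g h => (H g h).trans (H' _ _)⟩

/-- Isomorphisms map cosets of the center into cosets of the center. -/
lemma same_fibre_of_cayleyIso [NeZero (2 : F)] {ε i j : F} (hε : ¬IsSquare ε)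
    {f : Heis F → Heis F} (hf : Function.Bijective f)
    (H : ∀ g h : Heis F, h * g⁻¹ ∈ Xset ε i ↔ f h * (f g)⁻¹ ∈ Xset ε j)
    {g h : Heis F} (hx : g.x = h.x) (hy : g.y = h.y) :
    ((f g).x, (f g).y) = ((f h).x, (f h).y) := by
  by_contra hne
  obtain ⟨a, ha⟩ := exists_common_nextCoord hε j hne (symCoord (f g)) (symCoord (f h))
  obtain ⟨z, hz⟩ := hf.2 (ofSymCoord a (nextCoord ε j ((f g).x, (f g).y) a (symCoord (f g))))
  have h1 := (H g z).2 <| by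
    rw [mul_inv_mem_Xset_iff, hz, symCoord_ofSymCoord]; rfl
  have h2 := (H h z).2 <| by
    rw [mul_inv_mem_Xset_iff, hz, symCoord_ofSymCoord, ha]; rfl
  rw [mul_inv_mem_Xset_iff] at h1 h2
  rw [h1] at h2
  simp only [nextCoord, hx, hy] at h2
  have ht : symCoord g = symCoord h := by linear_combination h2
  refine hne ?_
  have : g = h := by rw [eq_ofSymCoord g, eq_ofSymCoord h, hx, hy, ht]
  rw [this]

/-- Isomorphic Cayley digraphs have parameters related by a field endomorphism. -/
lemma exists_ringHom_of_cayleyIso [NeZero (2 : F)] {ε i j : F} (hε : ¬IsSquare ε)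
    (hij : CayleyIso ε i j) : ∃ τ : F →+* F, τ (i ^ 2 * ε) = j ^ 2 * ε := by
  obtain ⟨f₀, hf₀, H₀⟩ := hij
  obtain ⟨f, hf, H, hf1⟩ : ∃ f : Heis F → Heis F, Function.Bijective f ∧
      (∀ g h : Heis F, h * g⁻¹ ∈ Xset ε i ↔ f h * (f g)⁻¹ ∈ Xset ε j) ∧ f 1 = 1 :=
    ⟨fun g => f₀ g * (f₀ 1)⁻¹, (Group.mulRight_bijective _).comp hf₀,
      fun g h => by rw [H₀]; simp, mul_inv_cancel _⟩
  have hone : (1 : Heis F) = ofSymCoord 0 0 := by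
    rw [eq_ofSymCoord 1]
    have h : (1 : Heis F) = ⟨0, 0, 0⟩ := rfl
    simp [h, ofSymCoord, symCoord]
  let base : F × F → F × F := fun v => ((f (ofSymCoord v 0)).x, (f (ofSymCoord v 0)).y)
  let T : F × F → F → F := fun v t => symCoord (f (ofSymCoord v t))
  have hbase : ∀ v t, ((f (ofSymCoord v t)).x, (f (ofSymCoord v t)).y) = base v :=
    fun v t => same_fibre_of_cayleyIso hε hf H rfl rfl
  have hb0 : base 0 = 0 := by
    simp only [base]
    rw [← hone, hf1]; rfl
  have hT0 : T 0 0 = 0 := by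
    simp only [T]
    rw [← hone, hf1, hone, symCoord_ofSymCoord]
  refine exists_ringHom_of_intertwines (f := base) (T := T) hb0 hT0 ?_ ?_
  · intro h
    have e : f (ofSymCoord 0 1) = f (ofSymCoord 0 0) := by
      rw [eq_ofSymCoord (f (ofSymCoord 0 1)), eq_ofSymCoord (f (ofSymCoord 0 0)), hbase, hbase]
      exact congrArg _ (h.trans hT0.symm)
    have e' := congrArg symCoord (hf.1 e)
    rw [symCoord_ofSymCoord, symCoord_ofSymCoord] at e'
    exact one_ne_zero e'
  · intro v w t
    have e := (H (ofSymCoord v t) (ofSymCoord w (nextCoord ε i v w t))).1 <| by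
      rw [mul_inv_mem_Xset_iff, symCoord_ofSymCoord, symCoord_ofSymCoord]; rfl
    rw [mul_inv_mem_Xset_iff, hbase, hbase] at e
    exact e

/-- There are at most `2 * l` parameters isomorphic to a given one. -/
lemma card_cayleyIso_le [Fintype F] [DecidableEq F] [NeZero (2 : F)] {p l : ℕ} (hp : p.Prime)
    (hl : 0 < l) (hq : Fintype.card F = p ^ l) {ε : F} (hε : ¬IsSquare ε) (i : F) (s : Finset F)
    (hs : ∀ j ∈ s, CayleyIso ε i j) : s.card ≤ 2 * l := by
  have := Fact.mk hp
  have : CharP F p := by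
    obtain ⟨n, hp', hn⟩ := FiniteField.card F (ringChar F)
    have : p = ringChar F := by
      rw [hq] at hn
      have hdvd : p ∣ ringChar F ^ (n : ℕ) := hn ▸ dvd_pow_self p hl.ne'
      exact (Nat.prime_dvd_prime_iff_eq hp hp').1 (hp.dvd_of_dvd_pow hdvd)
    rw [this]
    infer_instance
  let _ : Algebra (ZMod p) F := ZMod.algebra F p
  have hfin : Module.finrank (ZMod p) F = l := by
    have := Module.card_eq_pow_finrank (K := ZMod p) (V := F)
    rw [hq, ZMod.card] at this
    exact (Nat.pow_right_injective hp.two_le this).symm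
  have hε0 : ε ≠ 0 := fun h => hε (h ▸ IsSquare.zero)
  classical
  have hsub : (s.image fun j => j ^ 2 * ε) ⊆
      Finset.univ.image fun τ : F →ₐ[ZMod p] F => τ (i ^ 2 * ε) := by
    intro y hy
    obtain ⟨j, hj, rfl⟩ := Finset.mem_image.1 hy
    obtain ⟨τ, hτ⟩ := exists_ringHom_of_cayleyIso hε (hs j hj)
    have hcomm : ∀ r, τ (algebraMap (ZMod p) F r) = algebraMap (ZMod p) F r :=
      RingHom.congr_fun (Subsingleton.elim (τ.comp (algebraMap (ZMod p) F)) (algebraMap _ _))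
    exact Finset.mem_image.2 ⟨AlgHom.mk τ hcomm, Finset.mem_univ _, hτ⟩
  calc s.card ≤ 2 * (s.image fun j => j ^ 2 * ε).card := by
        refine Finset.card_le_mul_card_image s 2 fun b hb => ?_
        obtain ⟨j, -, rfl⟩ := Finset.mem_image.1 hb
        refine (Finset.card_le_card (t := {j, -j}) fun k hk => ?_).trans Finset.card_le_two
        have := mul_right_cancel₀ hε0 (Finset.mem_filter.1 hk).2
        simpa using sq_eq_sq_iff_eq_or_eq_neg.1 this
    _ ≤ 2 * l := by
        refine Nat.mul_le_mul_left 2 ((Finset.card_le_card hsub).trans ?_)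
        refine Finset.card_image_le.trans ?_
        rw [Finset.card_univ, ← hfin]
        exact AlgHom.card_le

end Geometry

lemma four_ne_zero_of_two (F : Type*) [Field F] [NeZero (2 : F)] : (4 : F) ≠ 0 := by
  rw [show (4 : F) = 2 * 2 by norm_num]
  exact mul_ne_zero (NeZero.ne 2) (NeZero.ne 2)

section CyclicModel

open scoped QuadraticAlgebra

variable {F : Type*} [Field F]

/-- The quotient `Eˣ / Fˣ`, where `E = F(√ε)`. -/
abbrev ProjUnits (ε : F) [Fact (∀ r : F, r ^ 2 ≠ ε + 0 * r)] : Type _ :=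
  (QuadraticAlgebra F ε 0)ˣ ⧸ (Units.map (algebraMap F (QuadraticAlgebra F ε 0)).toMonoidHom).range

variable (ε : F) [Fact (∀ r : F, r ^ 2 ≠ ε + 0 * r)]

lemma mk_eq_mk_of_smul {u v : (QuadraticAlgebra F ε 0)ˣ} {c : F} (hc : c ≠ 0)
    (h : (v : QuadraticAlgebra F ε 0) = c • (u : QuadraticAlgebra F ε 0)) :
    (u : ProjUnits ε) = v := by
  rw [QuotientGroup.eq]
  refine ⟨Units.mk0 c hc, ?_⟩
  rw [eq_inv_mul_iff_mul_eq]
  ext1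
  rw [h, Algebra.smul_def, mul_comm]
  rfl

lemma exists_smul_of_mk_eq_mk {u v : (QuadraticAlgebra F ε 0)ˣ} (h : (u : ProjUnits ε) = v) :
    ∃ c : F, (v : QuadraticAlgebra F ε 0) = c • (u : QuadraticAlgebra F ε 0) := by
  rw [QuotientGroup.eq] at h
  obtain ⟨c, hc⟩ := h
  refine ⟨c, ?_⟩
  rw [eq_inv_mul_iff_mul_eq] at hc
  rw [← hc, Algebra.smul_def, mul_comm]
  rfl

variable [NeZero (2 : F)]

/-- The unit `i + √ε / 4`. -/
def quarterUnit (i : F) : (QuadraticAlgebra F ε 0)ˣ :=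
  Units.mk0 ⟨i, 1 / 4⟩ fun h => by
    have h4 := four_ne_zero_of_two F
    simpa [h4] using congrArg QuadraticAlgebra.im h

/-- The identification of `(F ∪ {∞}, ψ)` with `Eˣ / Fˣ`. -/
def toProjUnits : Option F → ProjUnits ε
  | none => 1
  | some i => (quarterUnit ε i : ProjUnits ε)

lemma toProjUnits_psi [DecidableEq F] (a b : Option F) :
    toProjUnits ε (psi ε a b) = toProjUnits ε a * toProjUnits ε b := by
  have h4 := four_ne_zero_of_two F
  have h16 : (16 : F) ≠ 0 := by
    rw [show (16 : F) = 4 * 4 by norm_num]; exact mul_ne_zero h4 h4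
  match a, b with
  | none, b => exact (one_mul _).symm
  | some i, none => exact (mul_one _).symm
  | some i, some j =>
    have hprod : ((quarterUnit ε i * quarterUnit ε j : (QuadraticAlgebra F ε 0)ˣ) :
        QuadraticAlgebra F ε 0) = ⟨i * j + ε / 16, (i + j) / 4⟩ := by
      ext
      · simp [quarterUnit]; field_simp; norm_num
      · simp [quarterUnit]; ring
    simp only [psi]
    split_ifs with hij
    · have hne : i * j + ε / 16 ≠ 0 := by
        intro h0
        refine (quarterUnit ε i * quarterUnit ε j).ne_zero ?_
        rw [hprod, h0, hij, zero_div]; rfl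
      refine mk_eq_mk_of_smul ε (u := 1) hne ?_
      rw [hprod]
      ext <;> simp [hij]
    · refine mk_eq_mk_of_smul ε hij ?_
      rw [hprod]
      ext
      · simp [quarterUnit]; field_simp
      · simp [quarterUnit]; field_simp

lemma toProjUnits_bijective : Function.Bijective (toProjUnits ε) := by
  have h4 := four_ne_zero_of_two F
  have hne : ∀ i : F, (1 : ProjUnits ε) ≠ (quarterUnit ε i : ProjUnits ε) := by
    intro i h
    obtain ⟨c, hc⟩ := exists_smul_of_mk_eq_mk ε (u := 1) h
    have h0 : (1 : F) / 4 = c * 0 := congrArg QuadraticAlgebra.im hc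
    simp [h4] at h0
  constructor
  · rintro (_ | i) (_ | j) h
    · rfl
    · exact absurd h (hne j)
    · exact absurd h.symm (hne i)
    · obtain ⟨c, hc⟩ := exists_smul_of_mk_eq_mk ε h
      have e1 := congrArg QuadraticAlgebra.im hc
      have e2 := congrArg QuadraticAlgebra.re hc
      simp [quarterUnit, h4] at e1 e2
      subst e1
      simpa using e2.symm
  · intro x
    induction x using QuotientGroup.induction_on with
    | H z =>
      by_cases hz : (z : QuadraticAlgebra F ε 0).im = 0
      · refine ⟨none, mk_eq_mk_of_smul ε (u := 1) (c := (z : QuadraticAlgebra F ε 0).re) ?_ ?_⟩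
        · intro h0
          exact z.ne_zero (QuadraticAlgebra.ext h0 hz)
        · ext <;> simp [hz]
      · refine ⟨some ((z : QuadraticAlgebra F ε 0).re / (4 * (z : QuadraticAlgebra F ε 0).im)),
          mk_eq_mk_of_smul ε (mul_ne_zero h4 hz) ?_⟩
        ext <;> simp [quarterUnit] <;> field_simp

lemma toProjUnits_iterate [DecidableEq F] (a : Option F) (n : ℕ) :
    toProjUnits ε ((psi ε a)^[n] none) = toProjUnits ε a ^ n := by
  induction n with
  | zero => exact (pow_zero _).symm
  | succ n ih => rw [Function.iterate_succ_apply', toProjUnits_psi, ih, pow_succ']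

/-- At least `φ(q + 1)` elements of `F` generate `(F ∪ {∞}, ψ)`. -/
lemma exists_generators [Fintype F] [DecidableEq F] :
    ∃ A : Finset F, (∀ i ∈ A, ∀ x : Option F, ∃ n : ℕ, (psi ε (some i))^[n] none = x) ∧
      Nat.totient (Fintype.card F + 1) ≤ A.card := by
  classical
  have hbij := toProjUnits_bijective ε
  have : Finite (QuadraticAlgebra F ε 0) := Finite.of_equiv _ (QuadraticAlgebra.equivProd ε 0).symm
  have : Fintype (ProjUnits ε) := Fintype.ofFinite _
  have hcard : Fintype.card (ProjUnits ε) = Fintype.card F + 1 := by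
    rw [← Fintype.card_of_bijective hbij, Fintype.card_option]
  have htot := IsCyclic.card_orderOf_eq_totient (α := ProjUnits ε) dvd_rfl
  refine ⟨Finset.univ.filter fun i =>
    orderOf (toProjUnits ε (some i)) = Fintype.card (ProjUnits ε), ?_, ?_⟩
  · intro i hi x
    have hi' := (Finset.mem_filter.1 hi).2
    have htop : Subgroup.zpowers (toProjUnits ε (some i)) = ⊤ :=
      Subgroup.eq_top_of_card_eq _ (by rw [Nat.card_zpowers, hi', Nat.card_eq_fintype_card])
    obtain ⟨n, hn⟩ := mem_powers_iff_mem_zpowers.2 (htop ▸ Subgroup.mem_top (toProjUnits ε x))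
    exact ⟨n, hbij.1 (by rw [toProjUnits_iterate]; exact hn)⟩
  · rw [← hcard, ← htot]
    refine (Finset.card_le_card ?_).trans
      (Finset.card_image_le (f := fun i => toProjUnits ε (some i)))
    intro y hy
    have hy' := (Finset.mem_filter.1 hy).2
    obtain ⟨_ | i, rfl⟩ := hbij.2 y
    · rw [hcard] at hy'
      have := Fintype.card_pos (α := F)
      simp [toProjUnits] at hy'
    · exact Finset.mem_image_of_mem _ (Finset.mem_filter.2 ⟨Finset.mem_univ _, hy'⟩)

end CyclicModel


/-- There exists a set `S` of elements of `F_q`, each of which generates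
the cyclic group `(F_q^∞, ψ)` of order `q + 1`, such that `|S| ≥ ⌊φ(q+1)/(2l)⌋` (where
`q = p^l` for the prime `p`), and for any two distinct `i, j ∈ S` the Cayley digraphs
`Cay(G, X_i)` and `Cay(G, X_j)` are nonisomorphic: there is no bijection `f : G → G`
such that `hg⁻¹ ∈ X_i ↔ f(h)f(g)⁻¹ ∈ X_j` for all `g, h ∈ G`. -/
theorem statement_18 {F : Type*} [Field F] [Fintype F] [DecidableEq F]
    (p l : ℕ) (hp : p.Prime) (hl : 0 < l) (hq : Fintype.card F = p ^ l)
    (hodd : Odd (Fintype.card F)) (ε : F) (hε : ¬IsSquare ε) :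
    ∃ S : Finset F,
      (∀ i ∈ S, ∀ x : Option F, ∃ n : ℕ, (psi ε (some i))^[n] none = x) ∧
      Nat.totient (Fintype.card F + 1) / (2 * l) ≤ S.card ∧
      (∀ i ∈ S, ∀ j ∈ S, i ≠ j →
        ¬∃ f : Heis F → Heis F, Function.Bijective f ∧
          ∀ g h : Heis F, h * g⁻¹ ∈ Xset ε i ↔ f h * (f g)⁻¹ ∈ Xset ε j) := by
  have : NeZero (2 : F) := ⟨by
    intro h
    have hchar : ringChar F = 2 :=
      CharP.ringChar_of_prime_eq_zero Nat.prime_two (by exact_mod_cast h)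
    exact (Nat.not_even_iff_odd.2 hodd) (Nat.even_iff.2 (FiniteField.even_card_iff_char_two.1 hchar))⟩
  have : Fact (∀ r : F, r ^ 2 ≠ ε + 0 * r) :=
    ⟨fun r h => hε ⟨r, by linear_combination -h⟩⟩
  obtain ⟨A, hA, hAcard⟩ := exists_generators ε
  let setoid : Setoid F := ⟨CayleyIso ε, cayleyIso_equivalence ε⟩
  classical
  obtain ⟨S, hSA, hinj, himg⟩ := Finset.exists_subset_injOn_image_eq_of_surjOn
    (f := fun i => (⟦i⟧ : Quotient setoid)) A (A.image fun i => ⟦i⟧) (by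
      rw [Finset.coe_image]; exact Set.surjOn_image _ _)
  refine ⟨S, fun i hi => hA i (hSA hi), ?_, fun i hi j hj hij hiso => ?_⟩
  · refine (Nat.div_le_div_right hAcard).trans (Nat.div_le_of_le_mul ?_)
    rw [← Finset.card_image_of_injOn hinj, himg]
    refine Finset.card_le_mul_card_image A (2 * l) fun b hb => ?_
    obtain ⟨i, -, rfl⟩ := Finset.mem_image.1 hb
    refine card_cayleyIso_le hp hl hq hε i _ fun j hj => ?_
    exact Quotient.exact (Finset.mem_filter.1 hj).2.symm
  · exact hij (hinj hi hj (Quotient.sound (s := setoid) hiso))
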